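/- Let N be a positive integer and f a real-valued function on primes satisfying |f(p)| ≤ K p^{-c} for constants K, c > 0. Define J(x) = ∑_{n ≤ x, (n,N)=1} μ(n)²/n · ∏_{p|n} (1 + f(p)), assuming 1 + f(p) ≥ 0 for all p. Then J(x) = ∏_{p|N} (1 - 1/p) · ∏_{p ∤ N} (1 - 1/p²)(1 + f(p)/(p+1)) · log x + O(log log(N+2)), where the implied constant depends only on K and c, not on N or x ≥ 2. -/

import Mathlib

open Finset

/-!
The argument is that of Levin and Fainleib. Let `g n` be the weight divided by `n`, let `J t` be its
sum over `n ≤ eᵗ` and put `T = ∫ J`. Writing `log n = ∑ log p` over the primes dividing the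
squarefree `n` gives `∑ g n log n = ∑_m g m ∑_{p ≤ eᵗ / m, p ∤ m} g p log p`, and Mertens' theorem
evaluates the inner sum up to `O(1 + ∑_{p ∣ N} log p / p)`, which is `O(log log (N + 2))`: the
primes up to `log N` are handled by Mertens again, the others by `∑_{p ∣ N} log p ≤ log N`. Hence
`|2 T t - t J t|` is at most `O(log log (N + 2)) J t`. Since `(T / t²)' = (t J - 2 T) / t³`, and
since `J t = O(t)` uniformly in `N`, integrating from `t` to `∞` yields
`J t = P t + O(log log (N + 2))` with `P = lim J t / t`.

The limit `P` is an Euler product because the weight is `w * ζ` with `∑ |w d| / d` finite. That sum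
is not bounded uniformly in `N`, so this step alone would not give the error term.
-/

open Filter Topology

section PrimeSums

theorem sum_le_tsum_primes {a : ℕ → ℝ} (ha : ∀ p : ℕ, p.Prime → 0 ≤ a p)
    (hs : Summable fun p : Nat.Primes => a p) {s : Finset ℕ} (hsp : ∀ p ∈ s, p.Prime) :
    ∑ p ∈ s, a p ≤ ∑' p : Nat.Primes, a p := by
  rw [← sum_subtype_of_mem a hsp]
  exact Summable.sum_le_tsum (ι := Nat.Primes) _ (fun p _ => ha p p.2) hs

theorem summable_primes_log_mul_rpow {r : ℝ} (hr : r < -1) :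
    Summable fun p : Nat.Primes => Real.log p * (p : ℝ) ^ r := by
  obtain ⟨s, hrs, hs⟩ := exists_between hr
  have hsum : Summable fun p : Nat.Primes => (p : ℝ) ^ s / (s - r) :=
    (Nat.Primes.summable_rpow.2 hs).div_const _
  refine hsum.of_nonneg_of_le (fun p => by positivity) fun p => ?_
  have hp : (0 : ℝ) < p := mod_cast p.2.pos
  calc Real.log p * (p : ℝ) ^ r ≤ (p : ℝ) ^ (s - r) / (s - r) * (p : ℝ) ^ r := by
        gcongr
        exact Real.log_le_rpow_div hp.le (sub_pos.2 hrs)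
    _ = (p : ℝ) ^ s / (s - r) := by
        rw [div_mul_eq_mul_div, ← Real.rpow_add hp, sub_add_cancel]

theorem summable_primes_log_div_sq :
    Summable fun p : Nat.Primes => Real.log p / (p : ℝ) ^ 2 := by
  refine (summable_primes_log_mul_rpow (r := -2) (by norm_num)).congr fun p => ?_
  rw [Real.rpow_neg (by positivity), Real.rpow_two, div_eq_mul_inv]

theorem abs_log_factorial_sub_mul_log_le (n : ℕ) :
    |Real.log (n.factorial : ℝ) - n * Real.log n| ≤ n := by
  rcases n.eq_zero_or_pos with rfl | hn
  · simp
  have hfac : (0 : ℝ) < n.factorial := mod_cast n.factorial_pos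
  have hpow : Real.log (n.factorial : ℝ) ≤ n * Real.log n := by
    rw [← Real.log_pow]
    exact Real.log_le_log hfac (mod_cast n.factorial_le_pow)
  have hexp : n * Real.log n - Real.log (n.factorial : ℝ) ≤ n := by
    rw [← Real.log_pow, ← Real.log_div (by positivity) hfac.ne',
      Real.log_le_iff_le_exp (by positivity)]
    exact Real.pow_div_factorial_le_exp _ n.cast_nonneg _
  rw [abs_le]
  constructor <;> linarith

theorem log_factorial_eq_sum_primesLE (n : ℕ) :
    Real.log (n.factorial : ℝ) =
      ∑ p ∈ n.primesLE, (n.factorial.factorization p : ℝ) * Real.log p := by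
  rw [Real.log_nat_eq_sum_factorization, Finsupp.sum_of_support_subset _ _ _ (by simp)]
  intro p hp
  rw [Nat.support_factorization, Nat.mem_primeFactors] at hp
  exact Nat.mem_primesLE.2 ⟨hp.1.dvd_factorial.1 hp.2.1, hp.1⟩

theorem abs_factorization_factorial_sub_div_le {p : ℕ} (hp : p.Prime) (n : ℕ) :
    |(n.factorial.factorization p : ℝ) - n / p| ≤ 1 + 2 * n / (p : ℝ) ^ 2 := by
  have hp2 : (2 : ℝ) ≤ p := mod_cast hp.two_le
  have lower : (n : ℝ) / p - 1 ≤ n.factorial.factorization p := by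
    have hdiv : n / p ≤ n.factorial.factorization p := by
      rw [Nat.factorization_factorial hp (b := Nat.log p n + 2) (by lia)]
      simpa using single_le_sum (f := fun i => n / p ^ i) (s := Ico 1 (Nat.log p n + 2))
        (fun _ _ => Nat.zero_le _) (a := 1) (by simp)
    rw [← Nat.floor_div_eq_div (K := ℝ)] at hdiv
    linarith [Nat.sub_one_lt_floor ((n : ℝ) / p), (Nat.cast_le (α := ℝ)).2 hdiv]
  have upper : (n.factorial.factorization p : ℝ) ≤ n / p + 2 * n / (p : ℝ) ^ 2 :=
    calc (n.factorial.factorization p : ℝ) ≤ (n / (p - 1) : ℕ) :=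
          mod_cast Nat.factorization_factorial_le_div_pred hp n
      _ ≤ n / ((p - 1 : ℕ) : ℝ) := Nat.cast_div_le
      _ = n * (1 / ((p : ℝ) - 1)) := by rw [Nat.cast_pred hp.pos, mul_one_div]
      _ ≤ n * ((p + 2) / (p : ℝ) ^ 2) := by
          refine mul_le_mul_of_nonneg_left ?_ n.cast_nonneg
          rw [div_le_div_iff₀ (by linarith) (by positivity)]
          linarith
      _ = n / p + 2 * n / (p : ℝ) ^ 2 := by field_simp
  have : 0 ≤ 2 * n / (p : ℝ) ^ 2 := by positivity
  rw [abs_le]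
  constructor <;> linarith

theorem abs_log_factorial_sub_mul_sum_primesLE_le (n : ℕ) :
    |Real.log (n.factorial : ℝ) - n * ∑ p ∈ n.primesLE, Real.log p / p| ≤
      n * (Real.log 4 + 2 * ∑' p : Nat.Primes, Real.log p / (p : ℝ) ^ 2) := by
  have theta_le : ∑ p ∈ n.primesLE, Real.log p ≤ Real.log 4 * n := by
    simpa [Chebyshev.theta_eq_sum_primesLE] using Chebyshev.theta_le_log4_mul_x n.cast_nonneg
  have sum_le : ∑ p ∈ n.primesLE, Real.log p / (p : ℝ) ^ 2 ≤
      ∑' p : Nat.Primes, Real.log p / (p : ℝ) ^ 2 :=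
    sum_le_tsum_primes (a := fun p => Real.log p / (p : ℝ) ^ 2) (fun p _ => by positivity)
      summable_primes_log_div_sq fun p hp => (Nat.mem_primesLE.1 hp).2
  calc |Real.log (n.factorial : ℝ) - n * ∑ p ∈ n.primesLE, Real.log p / p|
      = |∑ p ∈ n.primesLE, ((n.factorial.factorization p : ℝ) - n / p) * Real.log p| := by
        rw [log_factorial_eq_sum_primesLE, mul_sum, ← sum_sub_distrib]
        congr 1
        exact sum_congr rfl fun p _ => by ring
    _ ≤ ∑ p ∈ n.primesLE, (1 + 2 * n / (p : ℝ) ^ 2) * Real.log p := by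
        refine (abs_sum_le_sum_abs _ _).trans (sum_le_sum fun p hp => ?_)
        rw [abs_mul, abs_of_nonneg (Real.log_natCast_nonneg p)]
        exact mul_le_mul_of_nonneg_right
          (abs_factorization_factorial_sub_div_le (Nat.mem_primesLE.1 hp).2 n)
          (Real.log_natCast_nonneg p)
    _ = ∑ p ∈ n.primesLE, Real.log p +
          n * (2 * ∑ p ∈ n.primesLE, Real.log p / (p : ℝ) ^ 2) := by
        simp_rw [mul_sum, ← sum_add_distrib]
        exact sum_congr rfl fun p _ => by ring
    _ ≤ n * (Real.log 4 + 2 * ∑' p : Nat.Primes, Real.log p / (p : ℝ) ^ 2) := by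
        rw [mul_add, mul_comm (n : ℝ) (Real.log 4)]
        gcongr

theorem abs_log_floor_sub_log_le {z : ℝ} (hz : 1 ≤ z) :
    |Real.log ⌊z⌋₊ - Real.log z| ≤ Real.log 2 := by
  have one_le_floor : (1 : ℝ) ≤ ⌊z⌋₊ := mod_cast (Nat.one_le_floor_iff z).2 hz
  have lower : Real.log ⌊z⌋₊ ≤ Real.log z :=
    Real.log_le_log (by linarith) (Nat.floor_le (by linarith))
  have upper : Real.log z ≤ Real.log 2 + Real.log ⌊z⌋₊ := by
    rw [← Real.log_mul (by norm_num) (by linarith)]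
    exact Real.log_le_log (by linarith) (by linarith [Nat.lt_floor_add_one z])
  have : 0 ≤ Real.log 2 := by positivity
  rw [abs_le]
  constructor <;> linarith

theorem exists_abs_sum_primesLE_log_div_sub_log_le :
    ∃ A : ℝ, ∀ z : ℝ, 1 ≤ z →
      |(∑ p ∈ ⌊z⌋₊.primesLE, Real.log p / p) - Real.log z| ≤ A := by
  set S := ∑' p : Nat.Primes, Real.log p / (p : ℝ) ^ 2
  refine ⟨Real.log 4 + 2 * S + 1 + Real.log 2, fun z hz => ?_⟩
  set n := ⌊z⌋₊
  set T := ∑ p ∈ n.primesLE, Real.log p / p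
  have hn : (0 : ℝ) < n := mod_cast (Nat.one_le_floor_iff z).2 hz
  have at_floor : |T - Real.log n| ≤ Real.log 4 + 2 * S + 1 := by
    refine le_of_mul_le_mul_left ?_ hn
    calc n * |T - Real.log n| = |n * T - n * Real.log n| := by
          rw [← mul_sub, abs_mul, abs_of_pos hn]
      _ ≤ |n * T - Real.log n.factorial| + |Real.log n.factorial - n * Real.log n| :=
          abs_sub_le _ _ _
      _ ≤ n * (Real.log 4 + 2 * S) + n := by
          rw [abs_sub_comm]
          exact add_le_add (abs_log_factorial_sub_mul_sum_primesLE_le n)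
            (abs_log_factorial_sub_mul_log_le n)
      _ = n * (Real.log 4 + 2 * S + 1) := by ring
  exact (abs_sub_le _ _ _).trans (add_le_add at_floor (abs_log_floor_sub_log_le hz))

end PrimeSums

section PrimeFactors

theorem sum_primeFactors_log_le {N : ℕ} (hN : N ≠ 0) :
    ∑ p ∈ N.primeFactors, Real.log p ≤ Real.log N := by
  rw [← Real.log_prod fun p hp => mod_cast (Nat.prime_of_mem_primeFactors hp).ne_zero,
    ← Nat.cast_prod]
  have prod_pos : 0 < ∏ p ∈ N.primeFactors, p :=
    prod_pos fun p hp => (Nat.prime_of_mem_primeFactors hp).pos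
  have prod_le : ∏ p ∈ N.primeFactors, p ≤ N :=
    Nat.le_of_dvd (Nat.pos_of_ne_zero hN) (Nat.prod_primeFactors_dvd N)
  exact Real.log_le_log (mod_cast prod_pos) (mod_cast prod_le)

theorem exists_sum_primeFactors_log_div_le :
    ∃ A : ℝ, ∀ N : ℕ, N ≠ 0 → ∀ y : ℝ, 1 ≤ y → Real.log N ≤ y →
      ∑ p ∈ N.primeFactors, Real.log p / p ≤ Real.log y + A := by
  obtain ⟨A, hA⟩ := exists_abs_sum_primesLE_log_div_sub_log_le
  refine ⟨A + 1, fun N hN y hy hNy => ?_⟩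
  have small : ∑ p ∈ N.primeFactors with p ≤ ⌊y⌋₊, Real.log p / p ≤ Real.log y + A := by
    refine (sum_le_sum_of_subset_of_nonneg (t := ⌊y⌋₊.primesLE) (fun p hp => ?_)
      fun p _ _ => by positivity).trans (by linarith [(abs_le.1 (hA y hy)).2])
    rw [mem_filter] at hp
    exact Nat.mem_primesLE.2 ⟨hp.2, Nat.prime_of_mem_primeFactors hp.1⟩
  have large : ∑ p ∈ N.primeFactors with ¬p ≤ ⌊y⌋₊, Real.log p / p ≤ 1 :=
    calc ∑ p ∈ N.primeFactors with ¬p ≤ ⌊y⌋₊, Real.log p / p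
        ≤ ∑ p ∈ N.primeFactors with ¬p ≤ ⌊y⌋₊, Real.log p / y := by
          refine sum_le_sum fun p hp => ?_
          have hyp : y < p := (Nat.floor_lt (by linarith)).1 (not_le.1 (mem_filter.1 hp).2)
          have := Real.log_natCast_nonneg p
          gcongr
      _ ≤ ∑ p ∈ N.primeFactors, Real.log p / y :=
          sum_le_sum_of_subset_of_nonneg (filter_subset _ _) fun p _ _ => by positivity
      _ ≤ 1 := by
          rw [← sum_div]
          exact div_le_one_of_le₀ ((sum_primeFactors_log_le hN).trans hNy) (by linarith)
  linarith [sum_filter_add_sum_filter_not N.primeFactors (· ≤ ⌊y⌋₊)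
    fun p => Real.log p / (p : ℝ)]

theorem exists_add_sum_primeFactors_log_div_le (B : ℝ) :
    ∃ A : ℝ, ∀ N : ℕ, 1 ≤ N →
      B + ∑ p ∈ N.primeFactors, Real.log p / p ≤ A * Real.log (Real.log (N + 2)) := by
  obtain ⟨A, hA⟩ := exists_sum_primeFactors_log_div_le
  have one_lt_log_three : 1 < Real.log 3 := by linarith [Real.log_three_gt_d9]
  have log_log_three_pos : 0 < Real.log (Real.log 3) := Real.log_pos one_lt_log_three
  refine ⟨1 + |B + A| / Real.log (Real.log 3), fun N hN => ?_⟩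
  have hN' : (1 : ℝ) ≤ N := mod_cast hN
  set y := Real.log ((N : ℝ) + 2)
  have log_three_le : Real.log 3 ≤ y := Real.log_le_log (by norm_num) (by linarith)
  have hNy : Real.log N ≤ y := Real.log_le_log (by linarith) (by linarith)
  have hy : 1 ≤ y := one_lt_log_three.le.trans log_three_le
  calc B + ∑ p ∈ N.primeFactors, Real.log p / p
      ≤ B + (Real.log y + A) := by gcongr; exact hA N (by lia) y hy hNy
    _ ≤ Real.log y + |B + A| / Real.log (Real.log 3) * Real.log (Real.log 3) := by
        rw [div_mul_cancel₀ _ log_log_three_pos.ne']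
        linarith [le_abs_self (B + A)]
    _ ≤ (1 + |B + A| / Real.log (Real.log 3)) * Real.log y := by
        rw [one_add_mul]
        gcongr

end PrimeFactors

section SquarefreeProd

/-- The arithmetic function `n ↦ μ(n)² ∏_{p ∣ n} h p`, through which the weights of the theorem are
expressed: a condition `(n, N) = 1` is encoded by letting `h` vanish on the primes dividing `N`. -/
def squarefreeProd (h : ℕ → ℝ) : ArithmeticFunction ℝ where
  toFun n := if Squarefree n then ∏ p ∈ n.primeFactors, h p else 0
  map_zero' := by simp

variable {h : ℕ → ℝ}

theorem squarefreeProd_apply (n : ℕ) :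
    squarefreeProd h n = if Squarefree n then ∏ p ∈ n.primeFactors, h p else 0 :=
  rfl

theorem squarefreeProd_prime {p : ℕ} (hp : p.Prime) : squarefreeProd h p = h p := by
  rw [squarefreeProd_apply, if_pos hp.prime.squarefree, hp.primeFactors, prod_singleton]

theorem squarefreeProd_prime_pow {p k : ℕ} (hp : p.Prime) (hk : 2 ≤ k) :
    squarefreeProd h (p ^ k) = 0 := by
  rw [squarefreeProd_apply, if_neg]
  rw [Nat.squarefree_pow_iff hp.ne_one (by lia)]
  lia

theorem isMultiplicative_squarefreeProd (h : ℕ → ℝ) : (squarefreeProd h).IsMultiplicative := by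
  refine ⟨by simp [squarefreeProd_apply], fun {m n} hmn => ?_⟩
  simp only [squarefreeProd_apply, Nat.squarefree_mul hmn, hmn.primeFactors_mul,
    prod_union hmn.disjoint_primeFactors, ite_and, ite_mul, mul_ite, zero_mul, mul_zero]
  split_ifs <;> rfl

theorem squarefreeProd_prime_mul {p : ℕ} (hp : p.Prime) (m : ℕ) :
    squarefreeProd h (p * m) = if p ∣ m then 0 else h p * squarefreeProd h m := by
  split_ifs with hpm
  · rw [squarefreeProd_apply, if_neg]
    exact fun hsq => hp.not_isUnit (hsq p (mul_dvd_mul_left p hpm))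
  · rw [(isMultiplicative_squarefreeProd h).map_mul_of_coprime
      ((hp.coprime_iff_not_dvd).2 hpm), squarefreeProd_prime hp]

theorem squarefreeProd_mono {h' : ℕ → ℝ} (hh : ∀ p : ℕ, p.Prime → 0 ≤ h p)
    (hle : ∀ p : ℕ, p.Prime → h p ≤ h' p) (n : ℕ) : squarefreeProd h n ≤ squarefreeProd h' n := by
  simp only [squarefreeProd_apply]
  split_ifs
  · exact prod_le_prod (fun p hp => hh p (Nat.prime_of_mem_primeFactors hp))
      fun p hp => hle p (Nat.prime_of_mem_primeFactors hp)
  · rfl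

theorem squarefreeProd_nonneg (hh : ∀ p : ℕ, p.Prime → 0 ≤ h p) (n : ℕ) :
    0 ≤ squarefreeProd h n := by
  rw [squarefreeProd_apply]
  split_ifs
  · exact prod_nonneg fun p hp => hh p (Nat.prime_of_mem_primeFactors hp)
  · rfl

theorem squarefreeProd_div_id (n : ℕ) :
    squarefreeProd (fun p => h p / p) n = squarefreeProd h n / n := by
  simp only [squarefreeProd_apply]
  split_ifs with hn
  · rw [prod_div_distrib, ← Nat.cast_prod, Nat.prod_primeFactors_of_squarefree hn]
  · rw [zero_div]

theorem squarefreeProd_mul_log (n : ℕ) :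
    squarefreeProd h n * Real.log n = ∑ p ∈ n.primeFactors, squarefreeProd h n * Real.log p := by
  rw [← mul_sum, squarefreeProd_apply]
  split_ifs with hn
  · rw [← Real.log_prod fun p hp => mod_cast (Nat.prime_of_mem_primeFactors hp).ne_zero,
      ← Nat.cast_prod, Nat.prod_primeFactors_of_squarefree hn]
  · rw [zero_mul, zero_mul]

end SquarefreeProd

section LevinFainleib

theorem sum_Ioc_filter_dvd {p : ℕ} (hp : 0 < p) (F : ℕ → ℝ) (M : ℕ) :
    ∑ n ∈ Ioc 0 M with p ∣ n, F n = ∑ k ∈ Ioc 0 (M / p), F (p * k) := by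
  have image_eq : {n ∈ Ioc 0 M | p ∣ n} = (Ioc 0 (M / p)).image (p * ·) := by
    ext n
    simp only [mem_filter, mem_Ioc, mem_image, Nat.le_div_iff_mul_le hp]
    constructor
    · rintro ⟨⟨hn, hnM⟩, k, rfl⟩
      exact ⟨k, ⟨Nat.pos_of_mul_pos_left hn, by rwa [mul_comm]⟩, rfl⟩
    · rintro ⟨k, ⟨hk, hkM⟩, rfl⟩
      exact ⟨⟨Nat.mul_pos hp hk, by rwa [mul_comm]⟩, dvd_mul_right p k⟩
  rw [image_eq, sum_image fun _ _ _ _ h => Nat.eq_of_mul_eq_mul_left hp h]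

theorem sum_primesLE_mul_sum_Ioc_div (a g : ℕ → ℝ) (M : ℕ) :
    ∑ p ∈ M.primesLE, a p * ∑ m ∈ Ioc 0 (M / p), g m =
      ∑ m ∈ Ioc 0 M, g m * ∑ p ∈ (M / m).primesLE, a p := by
  simp_rw [mul_sum]
  rw [sum_comm' (t' := Ioc 0 M) (s' := fun m => (M / m).primesLE)]
  · exact sum_congr rfl fun m _ => sum_congr rfl fun p _ => mul_comm _ _
  · intro p m
    simp only [Nat.mem_primesLE, mem_Ioc]
    constructor
    · rintro ⟨⟨-, hp⟩, hm, hmp⟩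
      rw [Nat.le_div_iff_mul_le hp.pos] at hmp
      exact ⟨⟨(Nat.le_div_iff_mul_le hm).2 (by rwa [mul_comm]), hp⟩, hm,
        (Nat.le_mul_of_pos_right m hp.pos).trans hmp⟩
    · rintro ⟨⟨hpm, hp⟩, hm, -⟩
      rw [Nat.le_div_iff_mul_le hm] at hpm
      exact ⟨⟨(Nat.le_mul_of_pos_right p hm).trans hpm, hp⟩, hm,
        (Nat.le_div_iff_mul_le hp.pos).2 (by rwa [mul_comm])⟩

variable {h : ℕ → ℝ}

theorem sum_squarefreeProd_mul_log (M : ℕ) :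
    ∑ n ∈ Ioc 0 M, squarefreeProd h n * Real.log n =
      ∑ p ∈ M.primesLE, h p * Real.log p * ∑ m ∈ Ioc 0 (M / p) with ¬p ∣ m, squarefreeProd h m := by
  have primeFactors_eq : ∀ n ∈ Ioc 0 M, n.primeFactors = {p ∈ M.primesLE | p ∣ n} := by
    intro n hn
    rw [mem_Ioc] at hn
    ext p
    simp only [Nat.mem_primeFactors_of_ne_zero hn.1.ne', mem_filter, Nat.mem_primesLE]
    exact ⟨fun hp => ⟨⟨(Nat.le_of_dvd hn.1 hp.2).trans hn.2, hp.1⟩, hp.2⟩,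
      fun hp => ⟨hp.1.2, hp.2⟩⟩
  calc ∑ n ∈ Ioc 0 M, squarefreeProd h n * Real.log n
      = ∑ n ∈ Ioc 0 M, ∑ p ∈ M.primesLE with p ∣ n, squarefreeProd h n * Real.log p :=
        sum_congr rfl fun n hn => by rw [squarefreeProd_mul_log, primeFactors_eq n hn]
    _ = ∑ p ∈ M.primesLE, ∑ n ∈ Ioc 0 M with p ∣ n, squarefreeProd h n * Real.log p := by
        simp_rw [sum_filter]
        exact sum_comm
    _ = ∑ p ∈ M.primesLE,
          h p * Real.log p * ∑ m ∈ Ioc 0 (M / p) with ¬p ∣ m, squarefreeProd h m := by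
        refine sum_congr rfl fun p hp => ?_
        have hp := (Nat.mem_primesLE.1 hp).2
        rw [sum_Ioc_filter_dvd hp.pos, sum_filter, mul_sum]
        refine sum_congr rfl fun m _ => ?_
        rw [squarefreeProd_prime_mul hp]
        split_ifs
        · simp only [zero_mul, mul_zero]
        · ring

theorem sum_squarefreeProd_filter_dvd_le (hh : ∀ p : ℕ, p.Prime → 0 ≤ h p) {p : ℕ} (hp : p.Prime)
    {L M : ℕ} (hLM : L ≤ M) :
    ∑ m ∈ Ioc 0 L with p ∣ m, squarefreeProd h m ≤ h p * ∑ m ∈ Ioc 0 M, squarefreeProd h m := by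
  rw [sum_Ioc_filter_dvd hp.pos, mul_sum]
  calc ∑ k ∈ Ioc 0 (L / p), squarefreeProd h (p * k)
      ≤ ∑ k ∈ Ioc 0 (L / p), h p * squarefreeProd h k := by
        refine sum_le_sum fun k _ => ?_
        rw [squarefreeProd_prime_mul hp]
        split_ifs
        · exact mul_nonneg (hh p hp) (squarefreeProd_nonneg hh k)
        · rfl
    _ ≤ ∑ k ∈ Ioc 0 M, h p * squarefreeProd h k :=
        sum_le_sum_of_subset_of_nonneg
          (Ioc_subset_Ioc_right ((Nat.div_le_self L p).trans hLM))
          fun k _ _ => mul_nonneg (hh p hp) (squarefreeProd_nonneg hh k)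

theorem abs_sum_squarefreeProd_mul_sum_primesLE_sub_le (hh : ∀ p : ℕ, p.Prime → 0 ≤ h p) (M : ℕ) :
    |∑ m ∈ Ioc 0 M, squarefreeProd h m * ∑ p ∈ (M / m).primesLE, h p * Real.log p -
        ∑ n ∈ Ioc 0 M, squarefreeProd h n * Real.log n| ≤
      (∑ p ∈ M.primesLE, h p ^ 2 * Real.log p) * ∑ m ∈ Ioc 0 M, squarefreeProd h m := by
  have h_mul_log_nonneg : ∀ p ∈ M.primesLE, 0 ≤ h p * Real.log p := fun p hp =>
    mul_nonneg (hh p (Nat.mem_primesLE.1 hp).2) (Real.log_natCast_nonneg p)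
  have difference_eq :
      ∑ m ∈ Ioc 0 M, squarefreeProd h m * ∑ p ∈ (M / m).primesLE, h p * Real.log p -
        ∑ n ∈ Ioc 0 M, squarefreeProd h n * Real.log n =
      ∑ p ∈ M.primesLE,
        h p * Real.log p * ∑ m ∈ Ioc 0 (M / p) with p ∣ m, squarefreeProd h m := by
    rw [← sum_primesLE_mul_sum_Ioc_div, sum_squarefreeProd_mul_log, ← sum_sub_distrib]
    refine sum_congr rfl fun p _ => ?_
    rw [← mul_sub, ← sum_filter_add_sum_filter_not (Ioc 0 (M / p)) (p ∣ ·), add_sub_cancel_right]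
  rw [difference_eq, sum_mul, abs_of_nonneg (sum_nonneg fun p hp =>
    mul_nonneg (h_mul_log_nonneg p hp) (sum_nonneg fun m _ => squarefreeProd_nonneg hh m))]
  refine sum_le_sum fun p hp => ?_
  calc h p * Real.log p * ∑ m ∈ Ioc 0 (M / p) with p ∣ m, squarefreeProd h m
      ≤ h p * Real.log p * (h p * ∑ m ∈ Ioc 0 M, squarefreeProd h m) :=
        mul_le_mul_of_nonneg_left (sum_squarefreeProd_filter_dvd_le hh (Nat.mem_primesLE.1 hp).2
          (Nat.div_le_self M p)) (h_mul_log_nonneg p hp)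
    _ = h p ^ 2 * Real.log p * ∑ m ∈ Ioc 0 M, squarefreeProd h m := by ring

/-- The partial sum `∑ g n` over `0 < n ≤ eᵗ`; the scale `t = log x` is the one on which the
Tauberian argument lives. -/
noncomputable def expSum (g : ℕ → ℝ) (t : ℝ) : ℝ :=
  ∑ n ∈ Ioc 0 ⌊Real.exp t⌋₊, g n

/-- The Riesz mean `∑ g n (t - log n)` over `0 < n ≤ eᵗ`, that is, the integral of `expSum g` over
`(-∞, t]`. -/
noncomputable def expRieszSum (g : ℕ → ℝ) (t : ℝ) : ℝ :=
  ∑ n ∈ Ioc 0 ⌊Real.exp t⌋₊, g n * (t - Real.log n)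

theorem log_le_of_mem_Ioc_floor_exp {t : ℝ} {n : ℕ} (hn : n ∈ Ioc 0 ⌊Real.exp t⌋₊) :
    Real.log n ≤ t := by
  rw [mem_Ioc, Nat.le_floor_iff (Real.exp_pos t).le] at hn
  exact (Real.log_le_iff_le_exp (mod_cast hn.1)).2 hn.2

theorem abs_two_mul_expRieszSum_squarefreeProd_sub_le (hh : ∀ p : ℕ, p.Prime → 0 ≤ h p) {R S : ℝ}
    (hR : ∀ z : ℝ, 1 ≤ z → |∑ p ∈ ⌊z⌋₊.primesLE, h p * Real.log p - Real.log z| ≤ R)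
    (hS : ∀ M : ℕ, ∑ p ∈ M.primesLE, h p ^ 2 * Real.log p ≤ S) (t : ℝ) :
    |2 * expRieszSum (squarefreeProd h) t - t * expSum (squarefreeProd h) t| ≤
      (R + S) * expSum (squarefreeProd h) t := by
  set g := squarefreeProd h
  set M := ⌊Real.exp t⌋₊ with hM
  set V : ℕ → ℝ := fun m => ∑ p ∈ (M / m).primesLE, h p * Real.log p
  have g_nonneg : ∀ m, 0 ≤ g m := squarefreeProd_nonneg hh
  have inner_le : ∀ m ∈ Ioc 0 M, |t - Real.log m - V m| ≤ R := by
    intro m hm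
    have hm0 : (0 : ℝ) < m := mod_cast (mem_Ioc.1 hm).1
    have log_eq : Real.log (Real.exp t / m) = t - Real.log m := by
      rw [Real.log_div (Real.exp_pos t).ne' hm0.ne', Real.log_exp]
    have one_le : 1 ≤ Real.exp t / m := by
      rw [one_le_div hm0, ← Real.log_le_iff_le_exp hm0]
      exact log_le_of_mem_Ioc_floor_exp hm
    have := hR _ one_le
    rwa [Nat.floor_div_natCast, log_eq, abs_sub_comm] at this
  have main_le : |∑ m ∈ Ioc 0 M, g m * (t - Real.log m - V m)| ≤ R * ∑ m ∈ Ioc 0 M, g m := by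
    rw [mul_sum]
    refine (abs_sum_le_sum_abs _ _).trans (sum_le_sum fun m hm => ?_)
    rw [abs_mul, abs_of_nonneg (g_nonneg m), mul_comm]
    exact mul_le_mul_of_nonneg_right (inner_le m hm) (g_nonneg m)
  have error_le := (abs_sum_squarefreeProd_mul_sum_primesLE_sub_le hh M).trans
    (mul_le_mul_of_nonneg_right (hS M) (sum_nonneg fun m _ => g_nonneg m))
  calc |2 * expRieszSum g t - t * expSum g t|
      = |∑ m ∈ Ioc 0 M, g m * (t - Real.log m - V m) +
          (∑ m ∈ Ioc 0 M, g m * V m - ∑ m ∈ Ioc 0 M, g m * Real.log m)| := by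
        simp only [expRieszSum, expSum, ← hM, mul_sum, ← sum_sub_distrib, ← sum_add_distrib]
        congr 1
        exact sum_congr rfl fun m _ => by ring
    _ ≤ R * ∑ m ∈ Ioc 0 M, g m + S * ∑ m ∈ Ioc 0 M, g m :=
        (abs_add_le _ _).trans (add_le_add main_le error_le)
    _ = (R + S) * expSum g t := (add_mul _ _ _).symm

end LevinFainleib

section Tauberian

theorem hasDerivWithinAt_expRieszSum (g : ℕ → ℝ) (t : ℝ) :
    HasDerivWithinAt (expRieszSum g) (expSum g t) (Set.Ici t) t := by
  have floor_eq : ∀ᶠ s in 𝓝[≥] t, ⌊Real.exp s⌋₊ = ⌊Real.exp t⌋₊ := by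
    have exp_lt : ∀ᶠ s in 𝓝[≥] t, Real.exp s < ⌊Real.exp t⌋₊ + 1 :=
      nhdsWithin_le_nhds (Real.continuous_exp.continuousAt.eventually_lt_const
        (Nat.lt_floor_add_one _))
    filter_upwards [exp_lt, self_mem_nhdsWithin] with s hs hts
    exact (Nat.floor_eq_iff (Real.exp_pos s).le).2
      ⟨(Nat.floor_le (Real.exp_pos t).le).trans (Real.exp_le_exp.2 hts), hs⟩
  have deriv_fixed : HasDerivWithinAt
      (fun s => ∑ n ∈ Ioc 0 ⌊Real.exp t⌋₊, g n * (s - Real.log n)) (expSum g t) (Set.Ici t) t := by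
    refine HasDerivWithinAt.fun_sum fun n _ => ?_
    simpa using ((hasDerivWithinAt_id t (Set.Ici t)).sub_const (Real.log n)).const_mul (g n)
  refine deriv_fixed.congr_of_eventuallyEq ?_ rfl
  filter_upwards [floor_eq] with s hs
  rw [expRieszSum, hs]

theorem expRieszSum_eq_sum_max (g : ℕ → ℝ) {t : ℝ} {M : ℕ} (hM : ⌊Real.exp t⌋₊ ≤ M) :
    expRieszSum g t = ∑ n ∈ Ioc 0 M, g n * max (t - Real.log n) 0 := by
  refine (sum_congr rfl fun n hn => ?_).trans
    (sum_subset (Ioc_subset_Ioc_right hM) fun n hn hn' => ?_)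
  · rw [max_eq_left (sub_nonneg.2 (log_le_of_mem_Ioc_floor_exp hn))]
  · have hn0 : 0 < n := (mem_Ioc.1 hn).1
    have floor_lt : ⌊Real.exp t⌋₊ < n := by simpa [hn0] using hn'
    have exp_lt : Real.exp t < n := (Nat.floor_lt (Real.exp_pos t).le).1 floor_lt
    rw [max_eq_right, mul_zero]
    exact sub_nonpos.2 ((Real.lt_log_iff_exp_lt (mod_cast hn0)).2 exp_lt).le

theorem continuous_expRieszSum (g : ℕ → ℝ) : Continuous (expRieszSum g) := by
  refine continuous_iff_continuousAt.2 fun t => ?_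
  have hcont : Continuous fun s =>
      ∑ n ∈ Ioc 0 ⌊Real.exp (t + 1)⌋₊, g n * max (s - Real.log n) 0 := by fun_prop
  refine hcont.continuousAt.congr ?_
  filter_upwards [Iio_mem_nhds (lt_add_one t)] with s hs
  exact (expRieszSum_eq_sum_max g (Nat.floor_mono (Real.exp_le_exp.2 (Set.mem_Iio.1 hs).le))).symm

variable {T J : ℝ → ℝ} {u E P : ℝ}

theorem abs_div_sq_sub_div_sq_le (hu : 0 < u) (hT : ContinuousOn T (Set.Ici u))
    (hT' : ∀ t, u ≤ t → HasDerivWithinAt T (J t) (Set.Ici t) t)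
    (hE : ∀ t, u ≤ t → |2 * T t - t * J t| ≤ E * t) {v : ℝ} (huv : u ≤ v) :
    |T v / v ^ 2 - T u / u ^ 2| ≤ E * (1 / u - 1 / v) := by
  have pos_of_le : ∀ {t}, u ≤ t → 0 < t := fun ht => hu.trans_le ht
  refine image_norm_le_of_norm_deriv_right_le_deriv_boundary' (a := u) (b := v)
    (f := fun t => T t / t ^ 2 - T u / u ^ 2) (f' := fun t => (t * J t - 2 * T t) / t ^ 3)
    (B := fun t => E * (1 / u - 1 / t)) (B' := fun t => E / t ^ 2) ?_ ?_ ?_ ?_ ?_ ?_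
    ⟨huv, le_rfl⟩
  · exact ((hT.mono Set.Icc_subset_Ici_self).div (by fun_prop)
      fun t ht => pow_ne_zero 2 (pos_of_le ht.1).ne').sub continuousOn_const
  · intro t ht
    have ht0 := pos_of_le ht.1
    have quotient_deriv := (hT' t ht.1).div (hasDerivWithinAt_pow 2 t) (by positivity)
    refine (quotient_deriv.sub_const _).congr_deriv ?_
    simp only [Nat.cast_ofNat]
    field_simp
    ring
  · simp
  · exact continuousOn_const.mul (continuousOn_const.sub
      (continuousOn_const.div continuousOn_id fun t ht => (pos_of_le ht.1).ne'))
  · intro t ht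
    have ht0 := pos_of_le ht.1
    refine ((((hasDerivAt_inv ht0.ne').const_sub (1 / u)).const_mul E).hasDerivWithinAt.congr_deriv
      ?_).congr (fun s _ => by rw [one_div s]) (by rw [one_div t])
    ring
  · intro t ht
    have ht0 := pos_of_le ht.1
    rw [Real.norm_eq_abs, abs_div, abs_sub_comm, abs_of_pos (pow_pos ht0 3),
      div_le_div_iff₀ (by positivity) (by positivity)]
    calc |2 * T t - t * J t| * t ^ 2 ≤ E * t * t ^ 2 := by
          gcongr
          exact hE t ht.1
      _ = E * t ^ 3 := by ring

theorem tendsto_div_sq_of_abs_two_mul_sub_le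
    (hE : ∀ t, u ≤ t → |2 * T t - t * J t| ≤ E * t)
    (hP : Tendsto (fun t => J t / t) atTop (𝓝 P)) :
    Tendsto (fun t => T t / t ^ 2) atTop (𝓝 (P / 2)) := by
  have diff_tendsto : Tendsto (fun t => T t / t ^ 2 - J t / t / 2) atTop (𝓝 0) := by
    refine squeeze_zero_norm' (a := fun t => E / 2 / t) ?_ (tendsto_const_nhds.div_atTop tendsto_id)
    filter_upwards [eventually_ge_atTop u, eventually_gt_atTop 0] with t hut ht
    have diff_eq : T t / t ^ 2 - J t / t / 2 = (2 * T t - t * J t) / (2 * t ^ 2) := by field_simp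
    rw [diff_eq, Real.norm_eq_abs, abs_div, abs_of_pos (by positivity : 0 < 2 * t ^ 2),
      div_le_div_iff₀ (by positivity) ht]
    calc |2 * T t - t * J t| * t ≤ E * t * t := by
          gcongr
          exact hE t hut
      _ = E / 2 * (2 * t ^ 2) := by ring
  simpa using diff_tendsto.add (hP.div_const 2)

theorem abs_sub_mul_le_of_abs_two_mul_sub_le (hu : 0 < u) (hT : ContinuousOn T (Set.Ici u))
    (hT' : ∀ t, u ≤ t → HasDerivWithinAt T (J t) (Set.Ici t) t)
    (hE : ∀ t, u ≤ t → |2 * T t - t * J t| ≤ E * t)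
    (hP : Tendsto (fun t => J t / t) atTop (𝓝 P)) : |J u - P * u| ≤ 3 * E := by
  have quotient_le : |P / 2 - T u / u ^ 2| ≤ E / u := by
    have E_nonneg : 0 ≤ E := nonneg_of_mul_nonneg_left ((abs_nonneg _).trans (hE u le_rfl)) hu
    refine le_of_tendsto ((tendsto_div_sq_of_abs_two_mul_sub_le hE hP).sub_const _).abs ?_
    filter_upwards [eventually_ge_atTop u] with v huv
    refine (abs_div_sq_sub_div_sq_le hu hT hT' hE huv).trans ?_
    rw [mul_sub, mul_one_div, mul_one_div]
    have : 0 ≤ E / v := div_nonneg E_nonneg (hu.trans_le huv).le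
    linarith
  refine le_of_mul_le_mul_left ?_ hu
  calc u * |J u - P * u|
      = |2 * u ^ 2 * (T u / u ^ 2 - P / 2) - (2 * T u - u * J u)| := by
        rw [← abs_of_pos hu, ← abs_mul, abs_of_pos hu]
        congr 1
        field_simp
        ring
    _ ≤ 2 * u ^ 2 * |P / 2 - T u / u ^ 2| + |2 * T u - u * J u| := by
        refine (abs_sub _ _).trans_eq ?_
        rw [abs_mul, abs_sub_comm (P / 2), abs_of_pos (by positivity : 0 < 2 * u ^ 2)]
    _ ≤ 2 * u ^ 2 * (E / u) + E * u := by
        gcongr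
        exact hE u le_rfl
    _ = u * (3 * E) := by
        field_simp
        ring

end Tauberian

section LogarithmicMeanValue

open ArithmeticFunction
open scoped ArithmeticFunction.zeta

theorem harmonic_mono : Monotone harmonic := fun _ _ h =>
  sum_le_sum_of_subset_of_nonneg (range_mono h) fun _ _ _ => by positivity

theorem sum_Ioc_mul_zeta_div (w : ArithmeticFunction ℝ) (M : ℕ) :
    ∑ n ∈ Ioc 0 M, (w * (ζ : ArithmeticFunction ℝ)) n / n =
      ∑ d ∈ Ioc 0 M, w d / d * harmonic (M / d) := by
  let inv : ArithmeticFunction ℝ := ⟨fun n => (n : ℝ)⁻¹, by simp⟩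
  have mul_zeta_div_eq : ∀ n, (w * (ζ : ArithmeticFunction ℝ)) n / n = (w.pmul inv * inv) n := by
    intro n
    rw [coe_mul_zeta_apply, ← Nat.sum_divisorsAntidiagonal fun d _ => w d, mul_apply, sum_div]
    refine sum_congr rfl fun x hx => ?_
    rw [← (Nat.mem_divisorsAntidiagonal.1 hx).1, Nat.cast_mul, div_eq_mul_inv, mul_inv, ← mul_assoc]
    rfl
  have sum_inv_eq : ∀ k : ℕ, ∑ m ∈ Ioc 0 k, inv m = harmonic k := by
    intro k
    rw [harmonic_eq_sum_Icc, Rat.cast_sum]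
    exact sum_congr rfl fun m _ => by simp [inv]
  simp only [mul_zeta_div_eq, sum_Ioc_mul_eq_sum_sum, sum_inv_eq, pmul_apply, div_eq_mul_inv]
  rfl

theorem expSum_mul_zeta_div (w : ArithmeticFunction ℝ) (t : ℝ) :
    expSum (fun n => (w * (ζ : ArithmeticFunction ℝ)) n / n) t =
      ∑' d : ℕ, w d / d * harmonic ⌊Real.exp t / d⌋₊ := by
  simp only [expSum, sum_Ioc_mul_zeta_div, Nat.floor_div_natCast]
  refine (tsum_eq_sum fun d hd => ?_).symm
  rcases d.eq_zero_or_pos with rfl | hd0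
  · simp
  · have floor_lt : ⌊Real.exp t⌋₊ < d := by simpa [hd0] using hd
    rw [Nat.div_eq_of_lt floor_lt, harmonic_zero, Rat.cast_zero, mul_zero]

theorem harmonic_floor_exp_div_nonneg (t : ℝ) (d : ℕ) :
    (0 : ℝ) ≤ harmonic ⌊Real.exp t / d⌋₊ :=
  mod_cast harmonic_zero ▸ harmonic_mono (Nat.zero_le _)

theorem harmonic_floor_exp_div_le {t : ℝ} (ht : 0 ≤ t) (d : ℕ) :
    (harmonic ⌊Real.exp t / d⌋₊ : ℝ) ≤ 1 + t :=
  calc (harmonic ⌊Real.exp t / d⌋₊ : ℝ) ≤ harmonic ⌊Real.exp t⌋₊ := by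
        rw [Nat.floor_div_natCast]
        exact mod_cast harmonic_mono (Nat.div_le_self _ d)
    _ ≤ 1 + Real.log (Real.exp t) := harmonic_floor_le_one_add_log _ (Real.one_le_exp ht)
    _ = 1 + t := by rw [Real.log_exp]

theorem tendsto_harmonic_floor_exp_div {d : ℕ} (hd : d ≠ 0) :
    Tendsto (fun t : ℝ => (harmonic ⌊Real.exp t / d⌋₊ : ℝ) / t) atTop (𝓝 1) := by
  have add_const_div_tendsto (a : ℝ) : Tendsto (fun t : ℝ => (t + a) / t) atTop (𝓝 1) := by
    have : Tendsto (fun t : ℝ => 1 + a / t) atTop (𝓝 (1 + 0)) :=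
      tendsto_const_nhds.add (tendsto_const_nhds.div_atTop tendsto_id)
    rw [add_zero] at this
    refine this.congr' ?_
    filter_upwards [eventually_ne_atTop 0] with t ht
    rw [add_div, div_self ht]
  refine tendsto_of_tendsto_of_tendsto_of_le_of_le' (add_const_div_tendsto (-Real.log d))
    (add_const_div_tendsto 1) ?_ ?_
  all_goals filter_upwards [eventually_ge_atTop 0] with t ht; gcongr
  · refine le_of_eq_of_le ?_ (log_le_harmonic_floor _ (by positivity))
    rw [Real.log_div (Real.exp_pos t).ne' (mod_cast hd), Real.log_exp, sub_eq_add_neg]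
  · exact (harmonic_floor_exp_div_le ht d).trans_eq (add_comm 1 t)

variable {w : ArithmeticFunction ℝ}

theorem abs_expSum_mul_zeta_div_le (hw : Summable fun d : ℕ => |w d / d|) {t : ℝ} (ht : 0 ≤ t) :
    |expSum (fun n => (w * (ζ : ArithmeticFunction ℝ)) n / n) t| ≤
      (∑' d : ℕ, |w d / d|) * (1 + t) := by
  rw [expSum_mul_zeta_div, ← tsum_mul_right, ← Real.norm_eq_abs]
  refine tsum_of_norm_bounded (hw.mul_right _).hasSum fun d => ?_
  rw [norm_mul, Real.norm_eq_abs, Real.norm_of_nonneg (harmonic_floor_exp_div_nonneg t d)]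
  gcongr
  exact harmonic_floor_exp_div_le ht d

theorem tendsto_expSum_mul_zeta_div (hw : Summable fun d : ℕ => |w d / d|) :
    Tendsto (fun t => expSum (fun n => (w * (ζ : ArithmeticFunction ℝ)) n / n) t / t) atTop
      (𝓝 (∑' d : ℕ, w d / d)) := by
  simp only [expSum_mul_zeta_div, ← tsum_div_const, mul_div_assoc]
  refine tendsto_tsum_of_dominated_convergence (hw.mul_right 2) (fun d => ?_) ?_
  · rcases eq_or_ne d 0 with rfl | hd
    · simp
    · simpa using (tendsto_harmonic_floor_exp_div hd).const_mul (w d / d)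
  · filter_upwards [eventually_ge_atTop 1] with t ht d
    have ht0 : 0 < t := by linarith
    rw [norm_mul, Real.norm_eq_abs, Real.norm_of_nonneg
      (div_nonneg (harmonic_floor_exp_div_nonneg t d) ht0.le)]
    gcongr
    rw [div_le_iff₀ ht0]
    linarith [harmonic_floor_exp_div_le ht0.le d]

end LogarithmicMeanValue

section EulerProduct

open ArithmeticFunction
open scoped ArithmeticFunction.zeta ArithmeticFunction.Moebius

theorem summable_norm_of_tsum_prime_pow_le {R : Type*} [NormedField R] {φ : ArithmeticFunction R}
    (hφ : φ.IsMultiplicative) (hs : ∀ p : ℕ, p.Prime → Summable fun e : ℕ => ‖φ (p ^ e)‖)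
    {a : ℕ → ℝ} (ha : Summable fun p : Nat.Primes => a p)
    (hle : ∀ p : ℕ, p.Prime → ∑' e : ℕ, ‖φ (p ^ e)‖ ≤ 1 + a p) : Summable fun n => ‖φ n‖ := by
  have a_nonneg : ∀ p : ℕ, p.Prime → 0 ≤ a p := by
    intro p hp
    have := (hs p hp).le_tsum 0 fun _ _ => norm_nonneg _
    rw [pow_zero, hφ.map_one, norm_one] at this
    linarith [hle p hp]
  refine summable_of_sum_range_le (c := Real.exp (∑' p : Nat.Primes, a p))
    (fun n => norm_nonneg _) fun n => ?_
  have smooth_hasSum :=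
    (EulerProduct.summable_and_hasSum_smoothNumbers_prod_primesBelow_tsum (f := fun n => ‖φ n‖)
      (by simp [hφ.map_one]) (fun hmn => by rw [hφ.map_mul_of_coprime hmn, norm_mul])
      (fun hp => (hs _ hp).norm) n).2
  calc ∑ i ∈ range n, ‖φ i‖
      = ∑ i ∈ range n, (Nat.smoothNumbers n).indicator (fun n => ‖φ n‖) i := by
        refine sum_congr rfl fun i hi => ?_
        rcases i.eq_zero_or_pos with rfl | hi0
        · rw [Set.indicator_apply, φ.map_zero, norm_zero, ite_self]
        · rw [Set.indicator_of_mem (Nat.mem_smoothNumbers_of_lt hi0 (mem_range.1 hi))]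
    _ ≤ ∏ p ∈ n.primesBelow, ∑' e : ℕ, ‖φ (p ^ e)‖ :=
        sum_le_hasSum _ (fun i _ => Set.indicator_nonneg (fun _ _ => norm_nonneg _) i)
          (hasSum_subtype_iff_indicator.1 smooth_hasSum)
    _ ≤ ∏ p ∈ n.primesBelow, Real.exp (a p) :=
        prod_le_prod (fun p _ => tsum_nonneg fun e => norm_nonneg _) fun p hp => by
          linarith [hle p (Nat.prime_of_mem_primesBelow hp), Real.add_one_le_exp (a p)]
    _ = Real.exp (∑ p ∈ n.primesBelow, a p) := (Real.exp_sum _ _).symm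
    _ ≤ Real.exp (∑' p : Nat.Primes, a p) :=
        Real.exp_le_exp.2 (sum_le_tsum_primes a_nonneg ha fun p => Nat.prime_of_mem_primesBelow)

/-- The function `w` with `w * ζ = squarefreeProd h`; it is small on average when `h` is close to
`1` on the primes. -/
noncomputable def moebiusTwist (h : ℕ → ℝ) : ArithmeticFunction ℝ :=
  (μ : ArithmeticFunction ℝ) * squarefreeProd h

variable {h : ℕ → ℝ}

theorem moebiusTwist_mul_zeta (h : ℕ → ℝ) :
    moebiusTwist h * (ζ : ArithmeticFunction ℝ) = squarefreeProd h := by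
  rw [moebiusTwist, mul_comm, ← mul_assoc, coe_zeta_mul_coe_moebius, one_mul]

theorem isMultiplicative_moebiusTwist (h : ℕ → ℝ) : (moebiusTwist h).IsMultiplicative :=
  isMultiplicative_moebius.intCast.mul (isMultiplicative_squarefreeProd h)

theorem moebiusTwist_prime_pow_succ {p : ℕ} (hp : p.Prime) (k : ℕ) :
    moebiusTwist h (p ^ (k + 1)) = squarefreeProd h (p ^ (k + 1)) - squarefreeProd h (p ^ k) := by
  rw [← moebiusTwist_mul_zeta, coe_mul_zeta_apply, coe_mul_zeta_apply,
    Nat.sum_divisors_prime_pow hp, Nat.sum_divisors_prime_pow hp, sum_range_succ _ (k + 1),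
    add_sub_cancel_left]

theorem moebiusTwist_prime {p : ℕ} (hp : p.Prime) : moebiusTwist h p = h p - 1 := by
  simpa [squarefreeProd_prime hp, (isMultiplicative_squarefreeProd h).map_one] using
    moebiusTwist_prime_pow_succ (h := h) hp 0

theorem moebiusTwist_prime_sq {p : ℕ} (hp : p.Prime) : moebiusTwist h (p ^ 2) = -h p := by
  rw [moebiusTwist_prime_pow_succ hp, squarefreeProd_prime_pow hp le_rfl, pow_one,
    squarefreeProd_prime hp, zero_sub]

theorem moebiusTwist_prime_pow {p e : ℕ} (hp : p.Prime) (he : 3 ≤ e) :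
    moebiusTwist h (p ^ e) = 0 := by
  obtain ⟨k, rfl⟩ : ∃ k, e = k + 1 := ⟨e - 1, by lia⟩
  rw [moebiusTwist_prime_pow_succ hp, squarefreeProd_prime_pow hp (by lia),
    squarefreeProd_prime_pow hp (by lia), sub_zero]

/-- The arithmetic function `n ↦ w n / n` for `w = moebiusTwist h`, bundled so that its
multiplicativity can be expressed. -/
noncomputable def moebiusTwistDiv (h : ℕ → ℝ) : ArithmeticFunction ℝ :=
  (moebiusTwist h).pdiv (ArithmeticFunction.id : ArithmeticFunction ℝ)

theorem moebiusTwistDiv_apply (n : ℕ) : moebiusTwistDiv h n = moebiusTwist h n / n := by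
  rw [moebiusTwistDiv, pdiv_apply, natCoe_apply, id_apply]

theorem isMultiplicative_moebiusTwistDiv (h : ℕ → ℝ) : (moebiusTwistDiv h).IsMultiplicative :=
  (isMultiplicative_moebiusTwist h).pdiv isMultiplicative_id.natCast

theorem hasSum_moebiusTwistDiv_prime_pow {p : ℕ} (hp : p.Prime) :
    HasSum (fun e : ℕ => moebiusTwistDiv h (p ^ e)) ((1 - 1 / (p : ℝ)) * (1 + h p / p)) := by
  have hsum : HasSum (fun e : ℕ => moebiusTwistDiv h (p ^ e))
      (∑ e ∈ range 3, moebiusTwistDiv h (p ^ e)) :=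
    hasSum_sum_of_ne_finset_zero fun e he => by
      rw [moebiusTwistDiv_apply, moebiusTwist_prime_pow hp (by simpa using he), zero_div]
  convert hsum using 1
  simp only [sum_range_succ, sum_range_zero, pow_zero, pow_one, moebiusTwistDiv_apply,
    (isMultiplicative_moebiusTwist h).map_one, moebiusTwist_prime hp, moebiusTwist_prime_sq hp]
  have : (p : ℝ) ≠ 0 := mod_cast hp.ne_zero
  push_cast
  field_simp
  ring

theorem hasSum_norm_moebiusTwistDiv_prime_pow {p : ℕ} (hp : p.Prime) :
    HasSum (fun e : ℕ => ‖moebiusTwistDiv h (p ^ e)‖)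
      (1 + |h p - 1| / p + |h p| / (p : ℝ) ^ 2) := by
  have hsum : HasSum (fun e : ℕ => ‖moebiusTwistDiv h (p ^ e)‖)
      (∑ e ∈ range 3, ‖moebiusTwistDiv h (p ^ e)‖) :=
    hasSum_sum_of_ne_finset_zero fun e he => by
      rw [moebiusTwistDiv_apply, moebiusTwist_prime_pow hp (by simpa using he), zero_div, norm_zero]
  convert hsum using 1
  simp [sum_range_succ, moebiusTwistDiv_apply, (isMultiplicative_moebiusTwist h).map_one,
    moebiusTwist_prime hp, moebiusTwist_prime_sq hp]

theorem abs_div_sq_le {p : ℕ} (hp : p ≠ 0) (y : ℝ) :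
    |y| / (p : ℝ) ^ 2 ≤ |y - 1| / p + 1 / (p : ℝ) ^ 2 := by
  have hp1 : (1 : ℝ) ≤ p := mod_cast Nat.one_le_iff_ne_zero.2 hp
  calc |y| / (p : ℝ) ^ 2 ≤ |y - 1| / (p : ℝ) ^ 2 + 1 / (p : ℝ) ^ 2 := by
        rw [← add_div]
        gcongr
        simpa using abs_add_le (y - 1) 1
    _ ≤ |y - 1| / p + 1 / (p : ℝ) ^ 2 := by
        gcongr
        exact le_self_pow₀ hp1 two_ne_zero

theorem summable_primes_inv_sq : Summable fun p : Nat.Primes => 1 / (p : ℝ) ^ 2 := by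
  refine (Nat.Primes.summable_rpow (r := -2).2 (by norm_num)).congr fun p => ?_
  rw [Real.rpow_neg (by positivity), Real.rpow_two, one_div]

theorem summable_norm_moebiusTwistDiv
    (hh : Summable fun p : Nat.Primes => |h p - 1| / (p : ℝ)) :
    Summable fun n : ℕ => ‖moebiusTwistDiv h n‖ := by
  refine summable_norm_of_tsum_prime_pow_le (isMultiplicative_moebiusTwistDiv h)
    (fun p hp => (hasSum_norm_moebiusTwistDiv_prime_pow hp).summable)
    (a := fun p => |h p - 1| / p + (|h p - 1| / p + 1 / (p : ℝ) ^ 2))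
    (hh.add (hh.add summable_primes_inv_sq)) fun p hp => ?_
  rw [(hasSum_norm_moebiusTwistDiv_prime_pow hp).tsum_eq, add_assoc]
  gcongr
  exact abs_div_sq_le hp.ne_zero (h p)

theorem hasProd_one_sub_mul_one_add_div
    (hh : Summable fun p : Nat.Primes => |h p - 1| / (p : ℝ)) :
    HasProd (fun p : Nat.Primes => (1 - 1 / (p : ℝ)) * (1 + h p / p))
      (∑' n : ℕ, moebiusTwistDiv h n) := by
  have euler_hasProd := EulerProduct.eulerProduct_hasProd
    (isMultiplicative_moebiusTwistDiv h).map_one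
    (isMultiplicative_moebiusTwistDiv h).map_mul_of_coprime (summable_norm_moebiusTwistDiv hh)
    (moebiusTwistDiv h).map_zero
  exact euler_hasProd.congr_fun fun p => (hasSum_moebiusTwistDiv_prime_pow p.2).tsum_eq.symm

theorem tendsto_expSum_squarefreeProd_div
    (hh : Summable fun p : Nat.Primes => |h p - 1| / (p : ℝ)) :
    Tendsto (fun t => expSum (fun n => squarefreeProd h n / n) t / t) atTop
      (𝓝 (∏' p : Nat.Primes, (1 - 1 / (p : ℝ)) * (1 + h p / p))) := by
  have hs := summable_norm_moebiusTwistDiv hh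
  have htsum := (hasProd_one_sub_mul_one_add_div hh).tprod_eq
  simp only [moebiusTwistDiv_apply] at hs htsum
  rw [htsum, ← moebiusTwist_mul_zeta]
  exact tendsto_expSum_mul_zeta_div hs

theorem exists_expSum_squarefreeProd_div_le
    (hh : Summable fun p : Nat.Primes => |h p - 1| / (p : ℝ)) :
    ∃ B : ℝ, 0 ≤ B ∧ ∀ t : ℝ, 0 ≤ t → expSum (fun n => squarefreeProd h n / n) t ≤ B * (1 + t) := by
  have hs := summable_norm_moebiusTwistDiv hh
  simp only [moebiusTwistDiv_apply] at hs
  rw [← moebiusTwist_mul_zeta]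
  exact ⟨_, tsum_nonneg fun _ => abs_nonneg _,
    fun t ht => (le_abs_self _).trans (abs_expSum_mul_zeta_div_le hs ht)⟩

end EulerProduct

section MeanValue

variable {h : ℕ → ℝ}

theorem abs_expSum_squarefreeProd_div_sub_le (hh : ∀ p : ℕ, p.Prime → 0 ≤ h p)
    (hsum : Summable fun p : Nat.Primes => |h p - 1| / (p : ℝ)) {R S B u : ℝ}
    (hR : ∀ z : ℝ, 1 ≤ z → |∑ p ∈ ⌊z⌋₊.primesLE, h p / p * Real.log p - Real.log z| ≤ R)
    (hS : ∀ M : ℕ, ∑ p ∈ M.primesLE, (h p / p) ^ 2 * Real.log p ≤ S) (hu : 0 < u)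
    (hB : ∀ t, u ≤ t → expSum (fun n => squarefreeProd h n / n) t ≤ B * t) :
    |expSum (fun n => squarefreeProd h n / n) u -
      (∏' p : Nat.Primes, (1 - 1 / (p : ℝ)) * (1 + h p / p)) * u| ≤ 3 * (B * (R + S)) := by
  have squarefreeProd_eq : ⇑(squarefreeProd fun p => h p / p) = fun n => squarefreeProd h n / n :=
    funext squarefreeProd_div_id
  have R_nonneg : 0 ≤ R := (abs_nonneg _).trans (hR 1 le_rfl)
  have S_nonneg : 0 ≤ S := by simpa using hS 0
  refine abs_sub_mul_le_of_abs_two_mul_sub_le hu (continuous_expRieszSum _).continuousOn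
    (fun t _ => hasDerivWithinAt_expRieszSum _ t) (fun t hut => ?_)
    (tendsto_expSum_squarefreeProd_div hsum)
  have riesz_le := abs_two_mul_expRieszSum_squarefreeProd_sub_le
    (fun p hp => div_nonneg (hh p hp) p.cast_nonneg) hR hS t
  rw [squarefreeProd_eq] at riesz_le
  calc _ ≤ (R + S) * expSum (fun n => squarefreeProd h n / n) t := riesz_le
    _ ≤ (R + S) * (B * t) := by
        gcongr
        exact hB t hut
    _ = B * (R + S) * t := by ring

end MeanValue

section SieveFactor

variable {F f : ℕ → ℝ} {N : ℕ}

theorem summable_primes_div_of_summable_mul_log_div (hF0 : ∀ p : ℕ, p.Prime → 0 ≤ F p)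
    (hF : Summable fun p : Nat.Primes => F p * Real.log p / p) :
    Summable fun p : Nat.Primes => F p / (p : ℝ) := by
  refine (hF.div_const (Real.log 2)).of_nonneg_of_le
    (fun p => div_nonneg (hF0 p p.2) p.1.cast_nonneg) fun p => ?_
  have log_two_le : Real.log 2 ≤ Real.log p :=
    Real.log_le_log two_pos (mod_cast p.2.two_le)
  have := hF0 p p.2
  rw [le_div_iff₀ (Real.log_pos one_lt_two), div_mul_eq_mul_div]
  gcongr

theorem summable_primes_one_add_div_sq_mul_log (hF0 : ∀ p : ℕ, p.Prime → 0 ≤ F p)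
    (hF : Summable fun p : Nat.Primes => F p * Real.log p / p) :
    Summable fun p : Nat.Primes => ((1 + F p) / (p : ℝ)) ^ 2 * Real.log p := by
  have hF' := summable_primes_div_of_summable_mul_log_div hF0 hF
  set s := ∑' p : Nat.Primes, F p / (p : ℝ)
  refine ((summable_primes_log_div_sq.mul_left 2).add (hF.mul_left (2 * s))).of_nonneg_of_le
    (fun p => by positivity) fun p => ?_
  have hFp : F p / p ≤ s :=
    hF'.le_tsum p fun q _ => div_nonneg (hF0 q q.2) q.1.cast_nonneg
  calc ((1 + F p) / (p : ℝ)) ^ 2 * Real.log p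
      = (1 + F p) ^ 2 * (Real.log p / (p : ℝ) ^ 2) := by ring
    _ ≤ (2 * (1 ^ 2 + F p ^ 2)) * (Real.log p / (p : ℝ) ^ 2) := by
        gcongr
        exact add_sq_le
    _ = 2 * (Real.log p / (p : ℝ) ^ 2) + 2 * (F p / p) * (F p * Real.log p / p) := by ring
    _ ≤ 2 * (Real.log p / (p : ℝ) ^ 2) + 2 * s * (F p * Real.log p / p) := by
        have := hF0 p p.2
        gcongr

/-- The factor at the prime `p` of the weight `n ↦ 1_{(n, N) = 1} μ(n)² ∏_{p ∣ n} (1 + f p)`. -/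
def sieveFactor (N : ℕ) (f : ℕ → ℝ) (p : ℕ) : ℝ :=
  if p ∣ N then 0 else 1 + f p

theorem sieveFactor_nonneg (hf : ∀ p : ℕ, p.Prime → 0 ≤ 1 + f p) {p : ℕ} (hp : p.Prime) :
    0 ≤ sieveFactor N f p := by
  rw [sieveFactor]
  split_ifs
  exacts [le_rfl, hf p hp]

theorem sieveFactor_le (hfF : ∀ p : ℕ, p.Prime → |f p| ≤ F p) {p : ℕ} (hp : p.Prime) :
    sieveFactor N f p ≤ 1 + F p := by
  have := abs_le.1 (hfF p hp)
  rw [sieveFactor]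
  split_ifs <;> linarith [abs_nonneg (f p)]

theorem abs_sieveFactor_sub_one_le (hfF : ∀ p : ℕ, p.Prime → |f p| ≤ F p) {p : ℕ} (hp : p.Prime) :
    |sieveFactor N f p - 1| ≤ F p + if p ∣ N then 1 else 0 := by
  have := hfF p hp
  rw [sieveFactor]
  split_ifs
  · simpa using (abs_nonneg (f p)).trans this
  · simpa using this

theorem summable_abs_sieveFactor_sub_one_div (hN : N ≠ 0) (hfF : ∀ p : ℕ, p.Prime → |f p| ≤ F p)
    (hF : Summable fun p : Nat.Primes => F p / (p : ℝ)) :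
    Summable fun p : Nat.Primes => |sieveFactor N f p - 1| / (p : ℝ) := by
  have finite_support : Summable fun p : Nat.Primes => (if (p : ℕ) ∣ N then 1 else 0) / (p : ℝ) :=
    summable_of_ne_finset_zero (s := N.primeFactors.subtype Nat.Prime) fun p hp => by
      rw [if_neg fun hpN => hp (mem_subtype.2 (Nat.mem_primeFactors.2 ⟨p.2, hpN, hN⟩)), zero_div]
  refine (hF.add finite_support).of_nonneg_of_le (fun p => by positivity) fun p => ?_
  rw [← add_div]
  gcongr
  exact abs_sieveFactor_sub_one_le hfF p.2

theorem abs_sum_primesLE_sieveFactor_sub_le (hN : N ≠ 0) (hfF : ∀ p : ℕ, p.Prime → |f p| ≤ F p)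
    (hF : Summable fun p : Nat.Primes => F p * Real.log p / p) (M : ℕ) :
    |∑ p ∈ M.primesLE, sieveFactor N f p / p * Real.log p - ∑ p ∈ M.primesLE, Real.log p / p| ≤
      ∑' p : Nat.Primes, F p * Real.log p / p + ∑ p ∈ N.primeFactors, Real.log p / p := by
  have summand_le : ∀ p ∈ M.primesLE, |sieveFactor N f p / p * Real.log p - Real.log p / p| ≤
      F p * Real.log p / p + if p ∣ N then Real.log p / p else 0 := by
    intro p hp
    calc |sieveFactor N f p / p * Real.log p - Real.log p / p|
        = |(sieveFactor N f p - 1) * (Real.log p / p)| := by ring_nf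
      _ = |sieveFactor N f p - 1| * (Real.log p / p) := by
          rw [abs_mul, abs_of_nonneg (by positivity : 0 ≤ Real.log p / p)]
      _ ≤ (F p + if p ∣ N then 1 else 0) * (Real.log p / p) := by
          gcongr
          exact abs_sieveFactor_sub_one_le hfF (Nat.mem_primesLE.1 hp).2
      _ = F p * Real.log p / p + if p ∣ N then Real.log p / p else 0 := by
          rw [add_mul, ite_mul, one_mul, zero_mul, mul_div_assoc]
  have sum_F_le : ∑ p ∈ M.primesLE, F p * Real.log p / p ≤
      ∑' p : Nat.Primes, F p * Real.log p / p :=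
    sum_le_tsum_primes (a := fun p => F p * Real.log p / p)
      (fun p hp => by have := (abs_nonneg _).trans (hfF p hp); positivity) hF
      fun p hp => (Nat.mem_primesLE.1 hp).2
  have sum_dvd_le : ∑ p ∈ M.primesLE with p ∣ N, Real.log p / (p : ℝ) ≤
      ∑ p ∈ N.primeFactors, Real.log p / p := by
    refine sum_le_sum_of_subset_of_nonneg (fun p hp => ?_) fun p _ _ => by positivity
    rw [mem_filter, Nat.mem_primesLE] at hp
    exact Nat.mem_primeFactors.2 ⟨hp.1.2, hp.2, hN⟩
  rw [← sum_sub_distrib]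
  refine ((abs_sum_le_sum_abs _ _).trans (sum_le_sum summand_le)).trans ?_
  rw [sum_add_distrib, ← sum_filter]
  exact add_le_add sum_F_le sum_dvd_le

theorem sum_primesLE_sieveFactor_sq_le (hf : ∀ p : ℕ, p.Prime → 0 ≤ 1 + f p)
    (hfF : ∀ p : ℕ, p.Prime → |f p| ≤ F p)
    (hF : Summable fun p : Nat.Primes => ((1 + F p) / (p : ℝ)) ^ 2 * Real.log p) (M : ℕ) :
    ∑ p ∈ M.primesLE, (sieveFactor N f p / p) ^ 2 * Real.log p ≤
      ∑' p : Nat.Primes, ((1 + F p) / (p : ℝ)) ^ 2 * Real.log p := by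
  have prime_of_mem : ∀ p ∈ M.primesLE, p.Prime := fun p hp => (Nat.mem_primesLE.1 hp).2
  refine (sum_le_sum fun p hp => ?_).trans
    (sum_le_tsum_primes (a := fun p => ((1 + F p) / (p : ℝ)) ^ 2 * Real.log p)
      (fun p _ => by positivity) hF prime_of_mem)
  have := sieveFactor_nonneg (N := N) hf (prime_of_mem p hp)
  gcongr
  exact sieveFactor_le hfF (prime_of_mem p hp)

theorem expSum_squarefreeProd_sieveFactor_div_le (hf : ∀ p : ℕ, p.Prime → 0 ≤ 1 + f p)
    (hfF : ∀ p : ℕ, p.Prime → |f p| ≤ F p) (t : ℝ) :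
    expSum (fun n => squarefreeProd (sieveFactor N f) n / n) t ≤
      expSum (fun n => squarefreeProd (fun p => 1 + F p) n / n) t :=
  sum_le_sum fun n _ => div_le_div_of_nonneg_right
    (squarefreeProd_mono (fun _ => sieveFactor_nonneg hf) (fun _ => sieveFactor_le hfF) n)
    n.cast_nonneg

theorem exists_abs_expSum_sieveFactor_sub_le (hF0 : ∀ p : ℕ, p.Prime → 0 ≤ F p)
    (hF : Summable fun p : Nat.Primes => F p * Real.log p / p) :
    ∃ C : ℝ, ∀ N : ℕ, 1 ≤ N → ∀ f : ℕ → ℝ, (∀ p : ℕ, p.Prime → |f p| ≤ F p) →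
      (∀ p : ℕ, p.Prime → 0 ≤ 1 + f p) → ∀ u : ℝ, Real.log 2 ≤ u →
        |expSum (fun n => squarefreeProd (sieveFactor N f) n / n) u -
          (∏' p : Nat.Primes, (1 - 1 / (p : ℝ)) * (1 + sieveFactor N f p / p)) * u| ≤
          C * Real.log (Real.log (N + 2)) := by
  have hF' := summable_primes_div_of_summable_mul_log_div hF0 hF
  have hF2 := summable_primes_one_add_div_sq_mul_log hF0 hF
  obtain ⟨A, hA⟩ := exists_abs_sum_primesLE_log_div_sub_log_le
  obtain ⟨B, hB0, hB⟩ := exists_expSum_squarefreeProd_div_le (h := fun p => 1 + F p)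
    (hF'.congr fun p => by rw [add_sub_cancel_left, abs_of_nonneg (hF0 p p.2)])
  set S₁ := ∑' p : Nat.Primes, F p * Real.log p / p
  set S₂ := ∑' p : Nat.Primes, ((1 + F p) / (p : ℝ)) ^ 2 * Real.log p
  obtain ⟨D, hD⟩ := exists_add_sum_primeFactors_log_div_le (S₁ + A + S₂)
  refine ⟨3 * (3 * B * D), fun N hN f hfF hf u hu => ?_⟩
  have hN0 : N ≠ 0 := Nat.pos_iff_ne_zero.1 hN
  have mertens_le : ∀ z : ℝ, 1 ≤ z →
      |∑ p ∈ ⌊z⌋₊.primesLE, sieveFactor N f p / p * Real.log p - Real.log z| ≤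
        S₁ + ∑ p ∈ N.primeFactors, Real.log p / p + A := fun z hz =>
    (abs_sub_le _ _ _).trans
      (add_le_add (abs_sum_primesLE_sieveFactor_sub_le hN0 hfF hF ⌊z⌋₊) (hA z hz))
  have expSum_le : ∀ t, u ≤ t →
      expSum (fun n => squarefreeProd (sieveFactor N f) n / n) t ≤ 3 * B * t := by
    intro t hut
    have half_lt : 1 / 2 < t := by linarith [Real.log_two_gt_d9]
    refine ((expSum_squarefreeProd_sieveFactor_div_le hf hfF t).trans
      (hB t (by linarith))).trans ?_
    rw [mul_comm 3, mul_assoc]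
    gcongr
    linarith
  calc _ ≤ 3 * (3 * B * (S₁ + ∑ p ∈ N.primeFactors, Real.log p / p + A + S₂)) :=
        abs_expSum_squarefreeProd_div_sub_le (fun _ => sieveFactor_nonneg hf)
          (summable_abs_sieveFactor_sub_one_div hN0 hfF hF') mertens_le
          (sum_primesLE_sieveFactor_sq_le hf hfF hF2) ((Real.log_pos one_lt_two).trans_le hu)
          expSum_le
    _ ≤ 3 * (3 * B * (D * Real.log (Real.log (N + 2)))) := by
        gcongr
        linarith [hD N hN]
    _ = 3 * (3 * B * D) * Real.log (Real.log (N + 2)) := by ring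

theorem sum_Icc_squarefree_coprime_eq_expSum (N : ℕ) (f : ℕ → ℝ) {x : ℝ} (hx : 0 < x) :
    (∑ n ∈ Icc 1 ⌊x⌋₊, if Squarefree n ∧ Nat.gcd n N = 1 then
        (1 / (n : ℝ)) * ∏ p ∈ n.primeFactors, (1 + f p) else 0) =
      expSum (fun n => squarefreeProd (sieveFactor N f) n / n) (Real.log x) := by
  rw [expSum, Real.exp_log hx]
  refine sum_congr rfl fun n _ => ?_
  rw [squarefreeProd_apply, ite_and]
  split_ifs with hsq hgcd
  · rw [one_div_mul_eq_div]
    congr 1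
    refine prod_congr rfl fun p hp => (if_neg fun hpN => ?_).symm
    exact (Nat.prime_of_mem_primeFactors hp).not_dvd_one
      (hgcd ▸ Nat.dvd_gcd (Nat.dvd_of_mem_primeFactors hp) hpN)
  · obtain ⟨p, hp, hpn, hpN⟩ := Nat.Prime.not_coprime_iff_dvd.1 hgcd
    have factor_eq_zero : sieveFactor N f p = 0 := if_pos hpN
    rw [prod_eq_zero (Nat.mem_primeFactors.2 ⟨hp, hpn, hsq.ne_zero⟩) factor_eq_zero, zero_div]
  · rw [zero_div]

theorem hasProd_primes_ite_dvd (hN : N ≠ 0) (a : ℕ → ℝ) :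
    HasProd (fun p : Nat.Primes => if (p : ℕ) ∣ N then a p else 1) (∏ p ∈ N.primeFactors, a p) := by
  have prod_eq : ∏ p ∈ N.primeFactors.subtype Nat.Prime, (if (p : ℕ) ∣ N then a p else 1) =
      ∏ p ∈ N.primeFactors, a p := by
    rw [prod_subtype_of_mem (fun p => if p ∣ N then a p else 1)
      fun p => Nat.prime_of_mem_primeFactors]
    exact prod_congr rfl fun p hp => if_pos (Nat.dvd_of_mem_primeFactors hp)
  rw [← prod_eq]
  exact hasProd_prod_of_ne_finset_one fun p hp =>
    if_neg fun hpN => hp (mem_subtype.2 (Nat.mem_primeFactors.2 ⟨p.2, hpN, hN⟩))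

theorem tprod_sieveFactor_eq (hN : N ≠ 0)
    (hs : Summable fun p : Nat.Primes => |sieveFactor N f p - 1| / (p : ℝ)) :
    ∏' p : Nat.Primes, (1 - 1 / (p : ℝ)) * (1 + sieveFactor N f p / p) =
      (∏ p ∈ N.primeFactors, (1 - 1 / (p : ℝ))) *
        ∏' p : Nat.Primes, if (p : ℕ) ∣ N then 1
          else (1 - 1 / (p : ℝ) ^ 2) * (1 + f p / ((p : ℝ) + 1)) := by
  have one_sub_ne_zero : ∀ p : ℕ, p.Prime → 1 - 1 / (p : ℝ) ≠ 0 := fun p hp =>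
    sub_ne_zero.2 ((div_lt_one (mod_cast hp.pos)).2 (mod_cast hp.one_lt)).ne'
  have factor_eq : ∀ p : Nat.Primes, (1 - 1 / (p : ℝ)) * (1 + sieveFactor N f p / p) *
      (if (p : ℕ) ∣ N then (1 - 1 / (p : ℝ))⁻¹ else 1) =
        if (p : ℕ) ∣ N then 1 else (1 - 1 / (p : ℝ) ^ 2) * (1 + f p / ((p : ℝ) + 1)) := by
    intro p
    rw [sieveFactor]
    split_ifs
    · rw [zero_div, add_zero, mul_one, mul_inv_cancel₀ (one_sub_ne_zero p p.2)]
    · have : (p : ℝ) ≠ 0 := mod_cast p.2.ne_zero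
      field_simp
      ring
  have tprod_eq := ((hasProd_one_sub_mul_one_add_div hs).mul
    (hasProd_primes_ite_dvd hN fun p => (1 - 1 / (p : ℝ))⁻¹)).tprod_eq
  simp only [factor_eq, prod_inv_distrib] at tprod_eq
  rw [tprod_eq, (hasProd_one_sub_mul_one_add_div hs).tprod_eq, mul_comm, inv_mul_cancel_right₀]
  exact prod_ne_zero_iff.2 fun p hp => one_sub_ne_zero p (Nat.prime_of_mem_primeFactors hp)

end SieveFactor

theorem levinson_lemma_3_11_general {F : ℕ → ℝ}
    (hF : Summable fun p : Nat.Primes => F p * Real.log p / p) :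
    ∃ C : ℝ, ∀ N : ℕ, 1 ≤ N → ∀ f : ℕ → ℝ,
      (∀ p : ℕ, p.Prime → |f p| ≤ F p) →
      (∀ p : ℕ, p.Prime → 0 ≤ 1 + f p) →
      ∀ x : ℝ, 2 ≤ x →
        |(∑ n ∈ Finset.Icc 1 ⌊x⌋₊,
            if Squarefree n ∧ Nat.gcd n N = 1 then
              (1 / (n : ℝ)) * ∏ p ∈ n.primeFactors, (1 + f p)
            else 0) -
          (∏ p ∈ N.primeFactors, (1 - 1 / (p : ℝ))) *
            (∏' p : Nat.Primes,
              if (p : ℕ) ∣ N then 1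
              else (1 - 1 / (p : ℝ) ^ 2) * (1 + f p / ((p : ℝ) + 1))) *
            Real.log x| ≤ C * Real.log (Real.log (N + 2)) := by
  by_cases hF0 : ∀ p : ℕ, p.Prime → 0 ≤ F p
  · obtain ⟨C, hC⟩ := exists_abs_expSum_sieveFactor_sub_le hF0 hF
    refine ⟨C, fun N hN f hfF hf x hx => ?_⟩
    have hN0 : N ≠ 0 := Nat.pos_iff_ne_zero.1 hN
    rw [sum_Icc_squarefree_coprime_eq_expSum N f (two_pos.trans_le hx),
      ← tprod_sieveFactor_eq hN0 (summable_abs_sieveFactor_sub_one_div hN0 hfF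
        (summable_primes_div_of_summable_mul_log_div hF0 hF))]
    exact hC N hN f hfF hf _ (Real.log_le_log two_pos hx)
  · exact ⟨0, fun N _ f hfF =>
      absurd (fun p hp => (abs_nonneg (f p)).trans (hfF p hp)) hF0⟩

theorem levinson_lemma_3_11 (K c : ℝ) (hK : 0 < K) (hc : 0 < c) :
    ∃ C : ℝ, ∀ N : ℕ, 1 ≤ N → ∀ f : ℕ → ℝ,
      (∀ p : ℕ, p.Prime → |f p| ≤ K * (p : ℝ) ^ (-c)) →
      (∀ p : ℕ, p.Prime → 0 ≤ 1 + f p) →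
      ∀ x : ℝ, 2 ≤ x →
        |(∑ n ∈ Finset.Icc 1 ⌊x⌋₊,
            if Squarefree n ∧ Nat.gcd n N = 1 then
              (1 / (n : ℝ)) * ∏ p ∈ n.primeFactors, (1 + f p)
            else 0) -
          (∏ p ∈ N.primeFactors, (1 - 1 / (p : ℝ))) *
            (∏' p : Nat.Primes,
              if (p : ℕ) ∣ N then 1
              else (1 - 1 / (p : ℝ) ^ 2) * (1 + f p / ((p : ℝ) + 1))) *
            Real.log x| ≤ C * Real.log (Real.log (N + 2)) := by
  refine levinson_lemma_3_11_general
    (((summable_primes_log_mul_rpow (r := -c - 1) (by linarith)).mul_left K).congr fun p => ?_)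
  rw [Real.rpow_sub_one (mod_cast p.2.ne_zero)]
  ring
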